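/- Let {X_n, n≥1} satisfy the φ-mixing condition (1) with rate r>2 and constant C>0, and the moment condition (2) with exponent α ∈ (0,1) and ν_α = sup_n E|X_n|^{1+α}, and let φ = Σ_{m=1}^∞ φ(m)^{1/2}. Let b>0, Y_k = X_k·1(|X_k|≤b) − E(X_k·1(|X_k|≤b)), and for integers m, l ≥ 1 define ξ_i = Σ_{j=1}^m Y_{2(i−1)m+j} for 1 ≤ i ≤ l. Let 0 < ε ≤ 1/2 and θ > 0 satisfy 2θ·m·b ≤ ε. Then E( exp( 2θ Σ_{i=1}^{l} ξ_i ) ) ≤ exp( e^ε φ(m) l ) · exp( 2θ²·m·l·ν_α·(1+4φ)·b^{1−α}·(1+ε) ), and the same bound holds for the even blocks η_i = Σ_{j=1}^m Y_{(2i−1)m+j}, 1 ≤ i ≤ l. -/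

import Mathlib

open MeasureTheory ProbabilityTheory Finset

noncomputable def phiCoef {Ω : Type*} [MeasurableSpace Ω] (μ : Measure Ω)
    (X : ℕ → Ω → ℝ) (m : ℕ) : ℝ :=
  sSup {x : ℝ | ∃ k : ℕ, 1 ≤ k ∧ ∃ A B : Set Ω,
    MeasurableSet[⨆ i ∈ Set.Icc 1 k, MeasurableSpace.comap (X i) inferInstance] A ∧
    MeasurableSet[⨆ i ∈ Set.Ici (k + m), MeasurableSpace.comap (X i) inferInstance] B ∧
    0 < μ A ∧
    x = |(μ (B ∩ A)).toReal / (μ A).toReal - (μ B).toReal|}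

noncomputable def phiSum {Ω : Type*} [MeasurableSpace Ω] (μ : Measure Ω)
    (X : ℕ → Ω → ℝ) : ℝ :=
  ∑' m : ℕ, Real.sqrt (phiCoef μ X (m + 1))

noncomputable def tailPart {Ω : Type*} [MeasurableSpace Ω] (μ : Measure Ω)
    (X : ℕ → Ω → ℝ) (b : ℝ) (k : ℕ) (ω : Ω) : ℝ :=
  (if b < |X k ω| then X k ω else 0) - ∫ ω', (if b < |X k ω'| then X k ω' else 0) ∂μ

noncomputable def mainPart {Ω : Type*} [MeasurableSpace Ω] (μ : Measure Ω)
    (X : ℕ → Ω → ℝ) (b : ℝ) (k : ℕ) (ω : Ω) : ℝ :=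
  (if |X k ω| ≤ b then X k ω else 0) - ∫ ω', (if |X k ω'| ≤ b then X k ω' else 0) ∂μ

/-!
Let `A` be an event of the past and `ℱ` the σ-algebra of the future. The excess `μ⟦A|ℱ⟧ - μ A` is
the density on `ℱ` of `B ↦ μ (A ∩ B) - μ A * μ B`, so mixing bounds the integral of its positive
part by `ϕ * μ A` and its `L¹` norm by twice that. Tested against `V` with values in `[c, d]` it
yields `E[V | past] ≤ E V + ϕ * (d - c)`. Tested against `2 t V` and combined with `2 t V ≤ t² + V²`
it yields `(E[V | past] - E V)² ≤ 2 ϕ (E[V² | past] + E V²)`, hence Ibragimov's covariance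
inequality.

The covariance inequality bounds the variance of the sum `S` of a block of `m` truncated terms, and
`eˣ ≤ 1 + x + (1 + ε) x² / 2` for `|x| ≤ 2 ε ≤ 1` turns this into a bound on `E exp (t (S - E S))`.
Consecutive blocks are at distance `m`, so conditioning on the earlier blocks adds `φ(m) (d - c)` to
each factor, where `[c, d]` is the range of `exp (t (S - E S))`. Here `d - c` can exceed `e^ε`, but
by at most `(t E S)²`, and this is paid for by the variance bound: for the `i`-th term of the block,
the covariances with the terms before and after it use only `√φ(k)` with `k < i` and with
`k ≤ m - i`, which omits from the two copies of `∑ k ≤ m, √φ(k)` as many as `m + 1` summands, each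
at least `√φ(m)`.
-/

section Dependence

variable {Ω : Type*} {𝒢 ℱ 𝒢' ℱ' : MeasurableSpace Ω} [m0 : MeasurableSpace Ω] {μ : Measure Ω}
  {ϕ : ℝ}

/-- The σ-algebra `ℱ` depends on `𝒢` with `φ`-mixing coefficient at most `ϕ`. The conditional
probability is multiplied out, so that events `A` of probability zero need no special treatment. -/
def PhiDependent (μ : Measure Ω) (𝒢 ℱ : MeasurableSpace Ω) (ϕ : ℝ) : Prop :=
  ∀ ⦃A B : Set Ω⦄, MeasurableSet[𝒢] A → MeasurableSet[ℱ] B →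
    |μ.real (A ∩ B) - μ.real A * μ.real B| ≤ ϕ * μ.real A

lemma PhiDependent.mono (h : PhiDependent μ 𝒢 ℱ ϕ) (h𝒢 : 𝒢' ≤ 𝒢) (hℱ : ℱ' ≤ ℱ) :
    PhiDependent μ 𝒢' ℱ' ϕ :=
  fun _ _ hA hB => h (h𝒢 _ hA) (hℱ _ hB)

/-- Excess of the conditional probability of `A` given `ℱ` over its probability. It is the density
of `B ↦ μ (A ∩ B) - μ A * μ B` on `ℱ`, which turns dependence bounds into `L¹` bounds. -/
noncomputable def condProbExcess (μ : Measure Ω) (ℱ : MeasurableSpace Ω) (A : Set Ω) (ω : Ω) : ℝ :=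
  (μ⟦A|ℱ⟧) ω - μ.real A

lemma measurable_condProbExcess (A : Set Ω) : Measurable[ℱ] (condProbExcess μ ℱ A) :=
  stronglyMeasurable_condExp.measurable.sub_const _

lemma abs_condProbExcess_le (A : Set Ω) :
    ∀ᵐ ω ∂μ, |condProbExcess μ ℱ A ω| ≤ condProbExcess μ ℱ A ω + 2 * μ.real A := by
  have hnonneg : 0 ≤ᵐ[μ] μ⟦A|ℱ⟧ :=
    condExp_nonneg (ae_of_all _ (Set.indicator_nonneg fun _ _ => zero_le_one))
  filter_upwards [hnonneg] with ω (hω : 0 ≤ (μ⟦A|ℱ⟧) ω)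
  have hA : 0 ≤ μ.real A := measureReal_nonneg
  unfold condProbExcess
  rw [abs_le]
  constructor <;> linarith

lemma integral_posPart_le_of_forall_setIntegral_le (hℱ : ℱ ≤ m0) {f : Ω → ℝ}
    (hf : Measurable[ℱ] f) {K : ℝ} (h : ∀ B, MeasurableSet[ℱ] B → ∫ ω in B, f ω ∂μ ≤ K) :
    ∫ ω, (f ω)⁺ ∂μ ≤ K := by
  have hB : MeasurableSet[ℱ] {ω | 0 ≤ f ω} := hf measurableSet_Ici
  have hpos : (fun ω => (f ω)⁺) = {ω | 0 ≤ f ω}.indicator f := by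
    ext ω
    by_cases hω : 0 ≤ f ω
    · simp [hω]
    · simp [hω, (not_le.1 hω).le]
  rw [hpos, integral_indicator (hℱ _ hB)]
  exact h _ hB

lemma integral_abs_le_of_forall_abs_setIntegral_le (hℱ : ℱ ≤ m0) {f : Ω → ℝ}
    (hf : Measurable[ℱ] f) (hfi : Integrable f μ) {K : ℝ}
    (h : ∀ B, MeasurableSet[ℱ] B → |∫ ω in B, f ω ∂μ| ≤ K) :
    ∫ ω, |f ω| ∂μ ≤ 2 * K := by
  have hpos := integral_posPart_le_of_forall_setIntegral_le hℱ hf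
    fun B hB => (le_abs_self _).trans (h B hB)
  have hneg : ∫ ω, (-f ω)⁺ ∂μ ≤ K := integral_posPart_le_of_forall_setIntegral_le hℱ hf.neg
    fun B hB => by
      change ∫ ω in B, -f ω ∂μ ≤ K
      rw [integral_neg]
      exact (neg_le_abs _).trans (h B hB)
  calc ∫ ω, |f ω| ∂μ = ∫ ω, ((f ω)⁺ + (-f ω)⁺) ∂μ := by
        simp_rw [posPart_neg, posPart_add_negPart]
    _ = ∫ ω, (f ω)⁺ ∂μ + ∫ ω, (-f ω)⁺ ∂μ := integral_add hfi.pos_part hfi.neg.pos_part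
    _ ≤ 2 * K := by linarith

lemma sq_integral_mul_le {U V : Ω → ℝ} (hU : MemLp U 2 μ) (hV : MemLp V 2 μ) :
    (∫ ω, U ω * V ω ∂μ) ^ 2 ≤ (∫ ω, U ω ^ 2 ∂μ) * ∫ ω, V ω ^ 2 ∂μ := by
  have hUV : Integrable (fun ω => U ω * V ω) μ := hU.integrable_mul hV
  have hquad : ∀ t : ℝ, 0 ≤ (∫ ω, V ω ^ 2 ∂μ) * (t * t) + 2 * (∫ ω, U ω * V ω ∂μ) * t +
      ∫ ω, U ω ^ 2 ∂μ := fun t => by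
    have hexpand : ∫ ω, (t * V ω + U ω) ^ 2 ∂μ =
        ∫ ω, (t ^ 2 * V ω ^ 2 + 2 * t * (U ω * V ω) + U ω ^ 2) ∂μ := by
      congr with ω
      ring
    rw [integral_add ((hV.integrable_sq.const_mul _).fun_add (hUV.const_mul _)) hU.integrable_sq,
      integral_add (hV.integrable_sq.const_mul _) (hUV.const_mul _), integral_const_mul,
      integral_const_mul] at hexpand
    have hsq : 0 ≤ ∫ ω, (t * V ω + U ω) ^ 2 ∂μ := integral_nonneg fun ω => sq_nonneg _
    linarith
  have hdiscrim := discrim_le_zero hquad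
  unfold discrim at hdiscrim
  linarith

section FiniteMeasure

variable [IsFiniteMeasure μ]

lemma condExp_le_condExp_of_forall_setIntegral_le (h𝒢 : 𝒢 ≤ m0) {f g : Ω → ℝ}
    (hf : Integrable f μ) (hg : Integrable g μ)
    (h : ∀ A, MeasurableSet[𝒢] A → ∫ ω in A, f ω ∂μ ≤ ∫ ω in A, g ω ∂μ) :
    μ[f|𝒢] ≤ᵐ[μ] μ[g|𝒢] := by
  refine ae_le_of_ae_le_trim (hm := h𝒢) (ae_le_of_forall_setIntegral_le
    (integrable_condExp.trim h𝒢 stronglyMeasurable_condExp)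
    (integrable_condExp.trim h𝒢 stronglyMeasurable_condExp) fun A hA _ => ?_)
  rw [← setIntegral_trim h𝒢 stronglyMeasurable_condExp hA,
    ← setIntegral_trim h𝒢 stronglyMeasurable_condExp hA,
    setIntegral_condExp h𝒢 hf hA, setIntegral_condExp h𝒢 hg hA]
  exact h A hA

lemma integrable_condProbExcess (A : Set Ω) : Integrable (condProbExcess μ ℱ A) μ :=
  integrable_condExp.sub (integrable_const _)

variable {A : Set Ω} {f : Ω → ℝ}

lemma condExp_indicator_ae_eq_mul (hA : MeasurableSet A) (hf : Measurable[ℱ] f)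
    (hfi : Integrable f μ) :
    μ[A.indicator f|ℱ] =ᵐ[μ] fun ω => (μ⟦A|ℱ⟧) ω * f ω := by
  have hind : (A.indicator fun _ => (1 : ℝ)) * f = A.indicator f := by
    ext ω
    by_cases hω : ω ∈ A <;> simp [hω]
  have h := condExp_mul_of_stronglyMeasurable_right (m := ℱ) (μ := μ) hf.stronglyMeasurable
    (by rw [hind]; exact hfi.indicator hA) ((integrable_const (1 : ℝ)).indicator hA)
  rwa [hind] at h

lemma integrable_condProbExcess_mul (hA : MeasurableSet A) (hf : Measurable[ℱ] f)
    (hfi : Integrable f μ) : Integrable (fun ω => condProbExcess μ ℱ A ω * f ω) μ := by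
  unfold condProbExcess
  simp_rw [sub_mul]
  exact (integrable_condExp.congr (condExp_indicator_ae_eq_mul hA hf hfi)).sub (hfi.const_mul _)

lemma integral_condProbExcess_mul (hℱ : ℱ ≤ m0) (hA : MeasurableSet A)
    (hf : Measurable[ℱ] f) (hfi : Integrable f μ) :
    ∫ ω, condProbExcess μ ℱ A ω * f ω ∂μ = ∫ ω in A, f ω ∂μ - μ.real A * ∫ ω, f ω ∂μ := by
  have hcond := condExp_indicator_ae_eq_mul (μ := μ) hA hf hfi
  unfold condProbExcess
  simp_rw [sub_mul]
  rw [integral_sub (integrable_condExp.congr hcond) (hfi.const_mul _), integral_const_mul,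
    ← integral_congr_ae hcond, integral_condExp hℱ, integral_indicator hA]

lemma setIntegral_condProbExcess (hℱ : ℱ ≤ m0) (hA : MeasurableSet A) {B : Set Ω}
    (hB : MeasurableSet[ℱ] B) :
    ∫ ω in B, condProbExcess μ ℱ A ω ∂μ = μ.real (A ∩ B) - μ.real A * μ.real B := by
  unfold condProbExcess
  rw [integral_sub integrable_condExp.integrableOn (integrable_const _),
    setIntegral_condExp hℱ ((integrable_const _).indicator hA) hB, setIntegral_indicator hA]
  simp [Set.inter_comm A B, mul_comm (μ.real A)]

namespace PhiDependent

lemma integral_posPart_condProbExcess_le (h : PhiDependent μ 𝒢 ℱ ϕ) (h𝒢 : 𝒢 ≤ m0) (hℱ : ℱ ≤ m0)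
    (hA : MeasurableSet[𝒢] A) :
    ∫ ω, (condProbExcess μ ℱ A ω)⁺ ∂μ ≤ ϕ * μ.real A :=
  integral_posPart_le_of_forall_setIntegral_le hℱ (measurable_condProbExcess A) fun B hB => by
    rw [setIntegral_condProbExcess hℱ (h𝒢 _ hA) hB]
    exact (le_abs_self _).trans (h hA hB)

lemma integral_abs_condProbExcess_le (h : PhiDependent μ 𝒢 ℱ ϕ) (h𝒢 : 𝒢 ≤ m0) (hℱ : ℱ ≤ m0)
    (hA : MeasurableSet[𝒢] A) :
    ∫ ω, |condProbExcess μ ℱ A ω| ∂μ ≤ 2 * (ϕ * μ.real A) :=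
  integral_abs_le_of_forall_abs_setIntegral_le hℱ (measurable_condProbExcess A)
    (integrable_condProbExcess A) fun B hB => by
      rw [setIntegral_condProbExcess hℱ (h𝒢 _ hA) hB]
      exact h hA hB

variable {V : Ω → ℝ}

lemma two_mul_setIntegral_sub_le (h : PhiDependent μ 𝒢 ℱ ϕ) (h𝒢 : 𝒢 ≤ m0) (hℱ : ℱ ≤ m0)
    (hA : MeasurableSet[𝒢] A) (hV : Measurable[ℱ] V) (hV2 : MemLp V 2 μ) (t : ℝ) :
    2 * t * (∫ ω in A, V ω ∂μ - μ.real A * ∫ ω, V ω ∂μ) ≤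
      2 * ϕ * t ^ 2 * μ.real A + (∫ ω in A, V ω ^ 2 ∂μ + μ.real A * ∫ ω, V ω ^ 2 ∂μ) := by
  set g := condProbExcess μ ℱ A
  have hA' := h𝒢 _ hA
  have hV1 : Integrable V μ := hV2.integrable one_le_two
  have hgi : Integrable g μ := integrable_condProbExcess A
  have hgV := integrable_condProbExcess_mul (μ := μ) hA' hV hV1
  have hgVsq := integrable_condProbExcess_mul (μ := μ) hA' (hV.pow_const 2) hV2.integrable_sq
  have hpointwise : ∀ᵐ ω ∂μ, 2 * t * (g ω * V ω) ≤
      t ^ 2 * |g ω| + (g ω * V ω ^ 2 + 2 * μ.real A * V ω ^ 2) := by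
    filter_upwards [abs_condProbExcess_le A] with ω hω
    have hamgm : 2 * t * (g ω * V ω) ≤ (t ^ 2 + V ω ^ 2) * |g ω| := by
      rcases abs_cases (g ω) with ⟨habs, hsign⟩ | ⟨habs, hsign⟩ <;> rw [habs]
      · nlinarith [mul_nonneg hsign (sq_nonneg (t - V ω))]
      · nlinarith [mul_nonneg (neg_nonneg.2 hsign.le) (sq_nonneg (t + V ω))]
    nlinarith [mul_le_mul_of_nonneg_left hω (sq_nonneg (V ω))]
  have hint := integral_mono_ae (hgV.const_mul (2 * t))
    ((hgi.abs.const_mul (t ^ 2)).add (hgVsq.add (hV2.integrable_sq.const_mul (2 * μ.real A))))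
    hpointwise
  simp only [Pi.add_apply] at hint
  rw [integral_const_mul, integral_add (hgi.abs.const_mul _)
    (hgVsq.fun_add (hV2.integrable_sq.const_mul _)), integral_add hgVsq
    (hV2.integrable_sq.const_mul _), integral_const_mul, integral_const_mul,
    integral_condProbExcess_mul hℱ hA' hV hV1,
    integral_condProbExcess_mul hℱ hA' (hV.pow_const 2) hV2.integrable_sq] at hint
  have habs := mul_le_mul_of_nonneg_left (h.integral_abs_condProbExcess_le h𝒢 hℱ hA) (sq_nonneg t)
  linarith

lemma two_mul_condExp_sub_le (h : PhiDependent μ 𝒢 ℱ ϕ) (h𝒢 : 𝒢 ≤ m0) (hℱ : ℱ ≤ m0)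
    (hV : Measurable[ℱ] V) (hV2 : MemLp V 2 μ) (t : ℝ) :
    ∀ᵐ ω ∂μ, 2 * t * ((μ[V|𝒢]) ω - ∫ ω, V ω ∂μ) ≤
      2 * ϕ * t ^ 2 + ((μ[V ^ 2|𝒢]) ω + ∫ ω, V ω ^ 2 ∂μ) := by
  have hV1 : Integrable V μ := hV2.integrable one_le_two
  have hVsq : Integrable (V ^ 2) μ := hV2.integrable_sq
  set K : Ω → ℝ := fun _ =>
    2 * t * ∫ ω, V ω ∂μ + 2 * ϕ * t ^ 2 + ∫ ω, V ω ^ 2 ∂μ with hK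
  have hKi : Integrable K μ := integrable_const _
  have hle := condExp_le_condExp_of_forall_setIntegral_le h𝒢 (hV1.smul (2 * t)) (hVsq.add hKi)
    fun A hA => by
      simp only [Pi.smul_apply, Pi.add_apply, smul_eq_mul]
      rw [integral_const_mul, integral_add hVsq.integrableOn hKi.integrableOn, setIntegral_const,
        smul_eq_mul]
      simp only [Pi.pow_apply]
      linarith [h.two_mul_setIntegral_sub_le h𝒢 hℱ hA hV hV2 t]
  have hKcond : μ[K|𝒢] = K := condExp_const h𝒢 _
  filter_upwards [hle, condExp_smul (2 * t) V 𝒢, condExp_add hVsq hKi 𝒢]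
    with ω hω hsmul hadd
  rw [hsmul, hadd, Pi.add_apply, hKcond, Pi.smul_apply, smul_eq_mul] at hω
  simp only [hK] at hω
  linarith

lemma sq_condExp_sub_le (h : PhiDependent μ 𝒢 ℱ ϕ) (h𝒢 : 𝒢 ≤ m0) (hℱ : ℱ ≤ m0)
    (hV : Measurable[ℱ] V) (hV2 : MemLp V 2 μ) :
    ∀ᵐ ω ∂μ, ((μ[V|𝒢]) ω - ∫ ω, V ω ∂μ) ^ 2 ≤
      2 * ϕ * ((μ[V ^ 2|𝒢]) ω + ∫ ω, V ω ^ 2 ∂μ) := by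
  have hrat : ∀ᵐ ω ∂μ, ∀ q : ℚ, 2 * (q : ℝ) * ((μ[V|𝒢]) ω - ∫ ω, V ω ∂μ) ≤
      2 * ϕ * (q : ℝ) ^ 2 + ((μ[V ^ 2|𝒢]) ω + ∫ ω, V ω ^ 2 ∂μ) :=
    ae_all_iff.2 fun q => h.two_mul_condExp_sub_le h𝒢 hℱ hV hV2 q
  filter_upwards [hrat] with ω hω
  have hreal : ∀ t : ℝ, 2 * t * ((μ[V|𝒢]) ω - ∫ ω, V ω ∂μ) ≤
      2 * ϕ * t ^ 2 + ((μ[V ^ 2|𝒢]) ω + ∫ ω, V ω ^ 2 ∂μ) := fun t =>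
    Rat.denseRange_cast.induction_on t (isClosed_le (by fun_prop) (by fun_prop)) hω
  have hdiscrim := discrim_le_zero (a := 2 * ϕ) (b := -(2 * ((μ[V|𝒢]) ω - ∫ ω, V ω ∂μ)))
    (c := (μ[V ^ 2|𝒢]) ω + ∫ ω, V ω ^ 2 ∂μ) fun t => by linarith [hreal t]
  unfold discrim at hdiscrim
  linarith

end PhiDependent

end FiniteMeasure

variable [IsProbabilityMeasure μ]

lemma phiDependent_bot (hϕ : 0 ≤ ϕ) : PhiDependent μ ⊥ ℱ ϕ := by
  intro A B hA _
  rcases MeasurableSpace.measurableSet_bot_iff.1 hA with rfl | rfl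
  · simp
  · simpa using hϕ

lemma PhiDependent.nonneg (h : PhiDependent μ 𝒢 ℱ ϕ) : 0 ≤ ϕ := by
  simpa using (abs_nonneg _).trans (h MeasurableSet.univ MeasurableSet.univ)

namespace PhiDependent

variable {U V W : Ω → ℝ}

lemma integral_sq_condExp_sub_le (h : PhiDependent μ 𝒢 ℱ ϕ) (h𝒢 : 𝒢 ≤ m0) (hℱ : ℱ ≤ m0)
    (hV : Measurable[ℱ] V) (hV2 : MemLp V 2 μ) :
    ∫ ω, ((μ[V|𝒢]) ω - ∫ ω, V ω ∂μ) ^ 2 ∂μ ≤ 4 * ϕ * ∫ ω, V ω ^ 2 ∂μ := by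
  calc ∫ ω, ((μ[V|𝒢]) ω - ∫ ω, V ω ∂μ) ^ 2 ∂μ
      ≤ ∫ ω, 2 * ϕ * ((μ[V ^ 2|𝒢]) ω + ∫ ω, V ω ^ 2 ∂μ) ∂μ :=
        integral_mono_ae ((hV2.condExp one_le_two).sub (memLp_const _)).integrable_sq
          ((integrable_condExp.add (integrable_const _)).const_mul _)
          (h.sq_condExp_sub_le h𝒢 hℱ hV hV2)
    _ = 4 * ϕ * ∫ ω, V ω ^ 2 ∂μ := by
        rw [integral_const_mul, integral_add integrable_condExp (integrable_const _),
          integral_condExp h𝒢]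
        simp only [Pi.pow_apply, integral_const, probReal_univ, smul_eq_mul, one_mul]
        ring

/-- Ibragimov's covariance inequality. -/
lemma sq_covariance_le (h : PhiDependent μ 𝒢 ℱ ϕ) (h𝒢 : 𝒢 ≤ m0) (hℱ : ℱ ≤ m0)
    (hU : Measurable[𝒢] U) (hU2 : MemLp U 2 μ) (hV : Measurable[ℱ] V) (hV2 : MemLp V 2 μ) :
    cov[U, V; μ] ^ 2 ≤ 4 * ϕ * (∫ ω, U ω ^ 2 ∂μ) * ∫ ω, V ω ^ 2 ∂μ := by
  have hcov : cov[U, V; μ] = ∫ ω, U ω * ((μ[V|𝒢]) ω - ∫ ω, V ω ∂μ) ∂μ := by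
    rw [covariance_eq_sub hU2 hV2, ← integral_condExp h𝒢 (f := U * V),
      integral_congr_ae (condExp_mul_of_stronglyMeasurable_left hU.stronglyMeasurable
        (hU2.integrable_mul hV2) (hV2.integrable one_le_two)), ← integral_mul_const,
      ← integral_sub (hU2.integrable_mul (hV2.condExp one_le_two))
        ((hU2.integrable one_le_two).mul_const _)]
    simp only [Pi.mul_apply, mul_sub]
  rw [hcov]
  calc _ ≤ (∫ ω, U ω ^ 2 ∂μ) * ∫ ω, ((μ[V|𝒢]) ω - ∫ ω, V ω ∂μ) ^ 2 ∂μ :=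
        sq_integral_mul_le hU2 ((hV2.condExp one_le_two).sub (memLp_const _))
    _ ≤ (∫ ω, U ω ^ 2 ∂μ) * (4 * ϕ * ∫ ω, V ω ^ 2 ∂μ) := by
        gcongr
        · exact h.integral_sq_condExp_sub_le h𝒢 hℱ hV hV2
    _ = _ := by ring

lemma setIntegral_le_of_mem_Icc {A : Set Ω} (h : PhiDependent μ 𝒢 ℱ ϕ) (h𝒢 : 𝒢 ≤ m0) (hℱ : ℱ ≤ m0)
    (hA : MeasurableSet[𝒢] A) (hV : Measurable[ℱ] V) {c d : ℝ} (hcd : ∀ ω, V ω ∈ Set.Icc c d) :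
    ∫ ω in A, V ω ∂μ ≤ μ.real A * (∫ ω, V ω ∂μ + ϕ * (d - c)) := by
  have hVi : Integrable V μ := .of_mem_Icc c d (hV.mono hℱ le_rfl).aemeasurable (ae_of_all _ hcd)
  have hdc : 0 ≤ d - c := by
    obtain ⟨ω⟩ := nonempty_of_isProbabilityMeasure μ
    linarith [(hcd ω).1, (hcd ω).2]
  have hexcess : ∫ ω, condProbExcess μ ℱ A ω * (V ω - c) ∂μ =
      ∫ ω in A, V ω ∂μ - μ.real A * ∫ ω, V ω ∂μ := by
    rw [integral_condProbExcess_mul hℱ (h𝒢 _ hA) (hV.sub_const c) (hVi.sub (integrable_const c)),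
      integral_sub hVi.integrableOn (integrable_const c), integral_sub hVi (integrable_const c)]
    simp only [integral_const, MeasurableSet.univ, measureReal_restrict_apply, Set.univ_inter,
      smul_eq_mul, probReal_univ, one_mul]
    ring
  have hpos : ∫ ω, condProbExcess μ ℱ A ω * (V ω - c) ∂μ ≤
      ∫ ω, (condProbExcess μ ℱ A ω)⁺ * (d - c) ∂μ := by
    refine integral_mono (integrable_condProbExcess_mul (h𝒢 _ hA) (hV.sub_const c)
      (hVi.sub (integrable_const c))) ((integrable_condProbExcess A).pos_part.mul_const _)
      fun ω => ?_
    exact mul_le_mul (le_posPart _) (by linarith [(hcd ω).2]) (by linarith [(hcd ω).1])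
      (posPart_nonneg _)
  rw [integral_mul_const] at hpos
  have hϕ := mul_le_mul_of_nonneg_right (h.integral_posPart_condProbExcess_le h𝒢 hℱ hA) hdc
  linarith

lemma condExp_le_of_mem_Icc (h : PhiDependent μ 𝒢 ℱ ϕ) (h𝒢 : 𝒢 ≤ m0) (hℱ : ℱ ≤ m0)
    (hV : Measurable[ℱ] V) {c d : ℝ} (hcd : ∀ ω, V ω ∈ Set.Icc c d) :
    ∀ᵐ ω ∂μ, (μ[V|𝒢]) ω ≤ ∫ ω, V ω ∂μ + ϕ * (d - c) := by
  have hVi : Integrable V μ := .of_mem_Icc c d (hV.mono hℱ le_rfl).aemeasurable (ae_of_all _ hcd)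
  have hle := condExp_le_condExp_of_forall_setIntegral_le h𝒢 hVi
    (integrable_const (∫ ω, V ω ∂μ + ϕ * (d - c))) fun A hA => by
      rw [setIntegral_const, smul_eq_mul]
      exact h.setIntegral_le_of_mem_Icc h𝒢 hℱ hA hV hcd
  rwa [condExp_const h𝒢] at hle

lemma integral_mul_le (h : PhiDependent μ 𝒢 ℱ ϕ) (h𝒢 : 𝒢 ≤ m0) (hℱ : ℱ ≤ m0)
    (hW : Measurable[𝒢] W) (hWi : Integrable W μ) (hW0 : ∀ ω, 0 ≤ W ω)
    (hV : Measurable[ℱ] V) {c d : ℝ} (hcd : ∀ ω, V ω ∈ Set.Icc c d) :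
    ∫ ω, W ω * V ω ∂μ ≤ (∫ ω, W ω ∂μ) * (∫ ω, V ω ∂μ + ϕ * (d - c)) := by
  have hVm : AEMeasurable V μ := (hV.mono hℱ le_rfl).aemeasurable
  have hVi : Integrable V μ := .of_mem_Icc c d hVm (ae_of_all _ hcd)
  have hWV : Integrable (W * V) μ := hWi.mul_bdd (c := max |c| |d|) hVm.aestronglyMeasurable
    (ae_of_all _ fun ω => abs_le_max_abs_abs (hcd ω).1 (hcd ω).2)
  have hcond := condExp_mul_of_stronglyMeasurable_left hW.stronglyMeasurable hWV hVi
  rw [← integral_mul_const, ← integral_condExp h𝒢 (f := fun ω => W ω * V ω)]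
  refine integral_mono_ae integrable_condExp (hWi.mul_const _) ?_
  filter_upwards [hcond, h.condExp_le_of_mem_Icc h𝒢 hℱ hV hcd] with ω hmul hle
  exact hmul.trans_le (mul_le_mul_of_nonneg_left hle (hW0 ω))

end PhiDependent

end Dependence

section ProductBound

variable {Ω : Type*} {𝒢 ℱ : ℕ → MeasurableSpace Ω} [m0 : MeasurableSpace Ω] {μ : Measure Ω}
  [IsProbabilityMeasure μ] {ϕ : ℝ} {V : ℕ → Ω → ℝ} {c d : ℕ → ℝ} {Q : ℝ}

lemma integral_prod_le_pow (h : ∀ i, PhiDependent μ (𝒢 i) (ℱ i) ϕ) (h𝒢 : ∀ i, 𝒢 i ≤ m0)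
    (hℱ : ∀ i, ℱ i ≤ m0) (hpast : ∀ i, ∀ j < i, Measurable[𝒢 i] (V j))
    (hfuture : ∀ i, Measurable[ℱ i] (V i)) (hc : ∀ i, 0 ≤ c i)
    (hcd : ∀ i ω, V i ω ∈ Set.Icc (c i) (d i)) (hQ : ∀ i, ∫ ω, V i ω ∂μ + ϕ * (d i - c i) ≤ Q)
    (l : ℕ) : ∫ ω, ∏ i ∈ range l, V i ω ∂μ ≤ Q ^ l := by
  have hV0 : ∀ i ω, 0 ≤ V i ω := fun i ω => (hc i).trans (hcd i ω).1
  induction l with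
  | zero => simp
  | succ l ih =>
    have hWm : Measurable[𝒢 l] fun ω => ∏ i ∈ range l, V i ω :=
      Finset.measurable_fun_prod _ fun i hi => hpast l i (mem_range.1 hi)
    have hW0 : ∀ ω, 0 ≤ ∏ i ∈ range l, V i ω := fun ω => prod_nonneg fun i _ => hV0 i ω
    have hWi : Integrable (fun ω => ∏ i ∈ range l, V i ω) μ :=
      .of_mem_Icc 0 (∏ i ∈ range l, d i) (hWm.mono (h𝒢 l) le_rfl).aemeasurable
        (ae_of_all _ fun ω => ⟨hW0 ω, prod_le_prod (fun i _ => hV0 i ω) fun i _ => (hcd i ω).2⟩)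
    simp_rw [prod_range_succ, pow_succ]
    have hQ0 : 0 ≤ Q := by
      obtain ⟨ω⟩ := nonempty_of_isProbabilityMeasure μ
      have hdc : 0 ≤ d l - c l := sub_nonneg.2 ((hcd l ω).1.trans (hcd l ω).2)
      exact (add_nonneg (integral_nonneg (hV0 l)) (mul_nonneg (h l).nonneg hdc)).trans (hQ l)
    calc ∫ ω, (∏ i ∈ range l, V i ω) * V l ω ∂μ
        ≤ (∫ ω, ∏ i ∈ range l, V i ω ∂μ) * (∫ ω, V l ω ∂μ + ϕ * (d l - c l)) :=
          (h l).integral_mul_le (h𝒢 l) (hℱ l) hWm hWi hW0 (hfuture l) (hcd l)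
      _ ≤ (∫ ω, ∏ i ∈ range l, V i ω ∂μ) * Q :=
          mul_le_mul_of_nonneg_left (hQ l) (integral_nonneg hW0)
      _ ≤ Q ^ l * Q := mul_le_mul_of_nonneg_right ih hQ0

end ProductBound

section Mixing

variable {Ω : Type*}

/-- The σ-algebra generated by `X 1, …, X k`. -/
abbrev pastSigma (X : ℕ → Ω → ℝ) (k : ℕ) : MeasurableSpace Ω :=
  ⨆ i ∈ Set.Icc 1 k, MeasurableSpace.comap (X i) inferInstance

/-- The σ-algebra generated by `X n, X (n + 1), …`. -/
abbrev futureSigma (X : ℕ → Ω → ℝ) (n : ℕ) : MeasurableSpace Ω :=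
  ⨆ i ∈ Set.Ici n, MeasurableSpace.comap (X i) inferInstance

variable {X : ℕ → Ω → ℝ} {k n : ℕ}

lemma measurable_pastSigma (hk : 1 ≤ k) (hkn : k ≤ n) : Measurable[pastSigma X n] (X k) :=
  (comap_measurable (X k)).mono (le_iSup₂_of_le
    (f := fun i (_ : i ∈ Set.Icc 1 n) => MeasurableSpace.comap (X i) inferInstance)
    k ⟨hk, hkn⟩ le_rfl) le_rfl

lemma measurable_futureSigma (hnk : n ≤ k) : Measurable[futureSigma X n] (X k) :=
  (comap_measurable (X k)).mono (le_iSup₂_of_le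
    (f := fun i (_ : i ∈ Set.Ici n) => MeasurableSpace.comap (X i) inferInstance)
    k hnk le_rfl) le_rfl

lemma pastSigma_comp_le {f : ℝ → ℝ} (hf : Measurable f) :
    pastSigma (fun i => f ∘ X i) k ≤ pastSigma X k :=
  iSup₂_mono fun i _ => by
    rw [← MeasurableSpace.comap_comp]
    exact MeasurableSpace.comap_mono hf.comap_le

lemma futureSigma_comp_le {f : ℝ → ℝ} (hf : Measurable f) :
    futureSigma (fun i => f ∘ X i) n ≤ futureSigma X n :=
  iSup₂_mono fun i _ => by
    rw [← MeasurableSpace.comap_comp]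
    exact MeasurableSpace.comap_mono hf.comap_le

lemma futureSigma_antitone : Antitone (futureSigma X) :=
  fun _ _ hmn => biSup_mono fun _ hi => hmn.trans hi

variable [MeasurableSpace Ω] {μ : Measure Ω}

lemma pastSigma_le (hX : ∀ i, Measurable (X i)) (k : ℕ) : pastSigma X k ≤ ‹MeasurableSpace Ω› :=
  iSup₂_le fun i _ => (hX i).comap_le

lemma futureSigma_le (hX : ∀ i, Measurable (X i)) (n : ℕ) :
    futureSigma X n ≤ ‹MeasurableSpace Ω› :=
  iSup₂_le fun i _ => (hX i).comap_le

/-- The sequence `X` is `φ`-mixing, its coefficient at distance `n` being at most `ϕ n`. As in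
`phiCoef`, the sequence starts at the index `1`. -/
def PhiMixing (μ : Measure Ω) (X : ℕ → Ω → ℝ) (ϕ : ℕ → ℝ) : Prop :=
  ∀ k n, 1 ≤ k → PhiDependent μ (pastSigma X k) (futureSigma X (k + n)) (ϕ n)

lemma PhiMixing.comp {ϕ : ℕ → ℝ} (h : PhiMixing μ X ϕ) {f : ℝ → ℝ} (hf : Measurable f) :
    PhiMixing μ (fun i => f ∘ X i) ϕ :=
  fun k n hk => (h k n hk).mono (pastSigma_comp_le hf) (futureSigma_comp_le hf)

lemma phiCoef_nonneg (m : ℕ) : 0 ≤ phiCoef μ X m := by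
  refine Real.sSup_nonneg ?_
  rintro x ⟨k, -, A, B, -, -, -, rfl⟩
  exact abs_nonneg _

lemma summable_sqrt_phiCoef {r C : ℝ} (hr : 2 < r) (hC : 0 ≤ C)
    (hmix : ∀ m : ℕ, 1 ≤ m → phiCoef μ X m ≤ C * ((m : ℝ) + 1) ^ (-r)) :
    Summable fun m : ℕ => √(phiCoef μ X (m + 1)) := by
  have hmajorant : Summable fun m : ℕ => √C * ((m + 2 : ℕ) : ℝ) ^ (-r / 2) :=
    ((summable_nat_add_iff 2).2 (Real.summable_nat_rpow.2 (by linarith))).mul_left _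
  refine hmajorant.of_nonneg_of_le (fun _ => Real.sqrt_nonneg _) fun m => ?_
  calc √(phiCoef μ X (m + 1)) ≤ √(C * ((m + 2 : ℕ) : ℝ) ^ (-r)) := by
        refine Real.sqrt_le_sqrt ((hmix (m + 1) le_add_self).trans_eq ?_)
        push_cast
        ring_nf
    _ = √C * ((m + 2 : ℕ) : ℝ) ^ (-r / 2) := by
        rw [Real.sqrt_mul hC, Real.sqrt_eq_rpow (_ ^ _), ← Real.rpow_mul (Nat.cast_nonneg _)]
        ring_nf

variable [IsProbabilityMeasure μ]

lemma PhiMixing.nonneg {ϕ : ℕ → ℝ} (h : PhiMixing μ X ϕ) (n : ℕ) : 0 ≤ ϕ n :=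
  (h 1 n le_rfl).nonneg

lemma PhiMixing.phiDependent_sub {ϕ : ℕ → ℝ} (h : PhiMixing μ X ϕ) (n m : ℕ) :
    PhiDependent μ (pastSigma X (n - m)) (futureSigma X (n + 1)) (ϕ m) := by
  rcases lt_or_ge m n with hmn | hnm
  · exact (h (n - m) m (by omega)).mono le_rfl (futureSigma_antitone (by omega))
  · have hbot : pastSigma X (n - m) = ⊥ := by simp [pastSigma, Nat.sub_eq_zero_of_le hnm]
    rw [hbot]
    exact phiDependent_bot (h.nonneg m)

lemma abs_measureReal_inter_div_sub_le_one (A B : Set Ω) :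
    |μ.real (B ∩ A) / μ.real A - μ.real B| ≤ 1 := by
  have hcond : μ.real (B ∩ A) / μ.real A ≤ 1 :=
    div_le_one_of_le₀ (measureReal_mono Set.inter_subset_right) measureReal_nonneg
  rw [← sub_zero (1 : ℝ)]
  exact abs_sub_le_of_le_of_le (by positivity) hcond measureReal_nonneg measureReal_le_one

lemma phiCoef_le_one (m : ℕ) : phiCoef μ X m ≤ 1 := by
  refine Real.sSup_le ?_ zero_le_one
  rintro x ⟨k, -, A, B, -, -, -, rfl⟩
  exact abs_measureReal_inter_div_sub_le_one A B

lemma abs_measureReal_inter_div_sub_le_phiCoef {m : ℕ} {A B : Set Ω} (hk : 1 ≤ k)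
    (hA : MeasurableSet[pastSigma X k] A) (hB : MeasurableSet[futureSigma X (k + m)] B)
    (hA0 : 0 < μ A) :
    |μ.real (B ∩ A) / μ.real A - μ.real B| ≤ phiCoef μ X m := by
  refine le_csSup ⟨1, ?_⟩ ⟨k, hk, A, B, hA, hB, hA0, rfl⟩
  rintro x ⟨k, -, A, B, -, -, -, rfl⟩
  exact abs_measureReal_inter_div_sub_le_one A B

lemma phiCoef_antitone : Antitone (phiCoef μ X) := by
  intro m n hmn
  refine Real.sSup_le ?_ (phiCoef_nonneg m)
  rintro x ⟨k, hk, A, B, hA, hB, hA0, rfl⟩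
  exact abs_measureReal_inter_div_sub_le_phiCoef hk hA
    (futureSigma_antitone (Nat.add_le_add_left hmn k) B hB) hA0

lemma phiMixing_phiCoef : PhiMixing μ X (phiCoef μ X) := by
  intro k n hk A B hA hB
  rcases eq_zero_or_pos (μ A) with hA0 | hA0
  · have hreal : μ.real A = 0 := by simp [Measure.real, hA0]
    simp [hreal, measureReal_mono_null Set.inter_subset_left hreal]
  · have hpos : 0 < μ.real A := ENNReal.toReal_pos hA0.ne' (measure_ne_top _ _)
    calc |μ.real (A ∩ B) - μ.real A * μ.real B|
        = |μ.real (B ∩ A) / μ.real A - μ.real B| * μ.real A := by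
          rw [← abs_of_pos hpos, ← abs_mul, abs_of_pos hpos, sub_mul,
            div_mul_cancel₀ _ hpos.ne', Set.inter_comm, mul_comm (μ.real B)]
      _ ≤ phiCoef μ X n * μ.real A := by
          gcongr
          exact abs_measureReal_inter_div_sub_le_phiCoef hk hA hB hA0

end Mixing

section Elementary

lemma exp_le_of_abs_le {x ε : ℝ} (hx : |x| ≤ 2 * ε) (hε : ε ≤ 1 / 2) :
    Real.exp x ≤ 1 + x + x ^ 2 * ((1 + ε) / 2) := by
  have htaylor := (abs_le.1 (Real.exp_bound (x := x) (by linarith) (n := 3) (by norm_num))).2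
  simp only [sum_range_succ, sum_range_zero, Nat.factorial] at htaylor
  norm_num at htaylor
  have hcube : |x| ^ 3 = x ^ 2 * |x| := by rw [pow_succ, sq_abs]
  rw [hcube] at htaylor
  nlinarith [mul_le_mul_of_nonneg_left hx (sq_nonneg x), mul_nonneg (sq_nonneg x) (abs_nonneg x)]

/-- The term `t ^ 2` is needed: for `t = 0` the left side stays below `exp u`, but not for `t = -u`
with `u` close to `1 / 2`. -/
lemma exp_sub_sub_exp_neg_sub_le {t u : ℝ} (htu : |t| ≤ u) (hu : u ≤ 1 / 2) :
    Real.exp (u - t) - Real.exp (-u - t) ≤ Real.exp u + t ^ 2 := by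
  have hexp_neg_t : Real.exp (-t) ≤ 1 + |t| + 3 / 4 * |t| ^ 2 := by
    have htaylor := exp_le_of_abs_le (x := -t) (ε := 1 / 2) (by rw [abs_neg]; linarith) le_rfl
    rw [sq_abs]
    linarith [neg_le_abs t]
  have hwidth : 1 - Real.exp (-(2 * u)) ≤ 2 / 3 := by
    have hmono : Real.exp (-1) ≤ Real.exp (-(2 * u)) := Real.exp_le_exp.2 (by linarith)
    have hthird : (1 : ℝ) / 3 ≤ Real.exp (-1) := by
      rw [Real.exp_neg, one_div]
      exact inv_anti₀ (Real.exp_pos 1) (Real.exp_one_lt_d9.le.trans (by norm_num))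
    linarith
  have hhalf : 1 / 2 ≤ Real.exp (-u) := by linarith [Real.add_one_le_exp (-u)]
  calc Real.exp (u - t) - Real.exp (-u - t)
      = Real.exp u * (Real.exp (-t) * (1 - Real.exp (-(2 * u)))) := by
        rw [mul_sub, mul_sub, ← Real.exp_add, mul_one, ← Real.exp_add, ← Real.exp_add]
        ring_nf
    _ ≤ Real.exp u * ((1 + |t| + 3 / 4 * |t| ^ 2) * (2 / 3)) := by
        refine mul_le_mul_of_nonneg_left ?_ (Real.exp_pos u).le
        exact (mul_le_mul_of_nonneg_left hwidth (Real.exp_pos _).le).trans (by gcongr)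
    _ ≤ Real.exp u * (1 + t ^ 2 * (1 / 2)) := by
        gcongr
        rw [← sq_abs t]
        nlinarith [abs_nonneg t]
    _ ≤ Real.exp u * (1 + t ^ 2 * Real.exp (-u)) := by gcongr
    _ = Real.exp u + t ^ 2 := by
        rw [mul_add, mul_left_comm, ← Real.exp_add]
        simp

lemma sum_range_add_mul_le {s : ℕ → ℝ} (hs : Antitone s) {m p : ℕ} (hpm : p ≤ m) :
    ∑ k ∈ range p, s (k + 1) + (m - p) * s m ≤ ∑ k ∈ range m, s (k + 1) := by
  have htail := card_nsmul_le_sum (Ico p m) (fun k => s (k + 1)) (s m)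
    fun k hk => hs (mem_Ico.1 hk).2
  rw [Nat.card_Ico, nsmul_eq_mul, Nat.cast_sub hpm] at htail
  rw [← sum_range_add_sum_Ico (fun k => s (k + 1)) hpm]
  gcongr

variable {Ω : Type*} [MeasurableSpace Ω] {μ : Measure Ω} [IsProbabilityMeasure μ] {S : Ω → ℝ}
  {ε : ℝ}

lemma abs_integral_le_of_forall_abs_le (hSε : ∀ ω, |S ω| ≤ ε) : |∫ ω, S ω ∂μ| ≤ ε := by
  simpa using norm_integral_le_of_norm_le_const (μ := μ) (f := S) (ae_of_all _ hSε)

lemma integral_exp_sub_integral_le (hS : Measurable S) (hSε : ∀ ω, |S ω| ≤ ε) (hε : ε ≤ 1 / 2) :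
    ∫ ω, Real.exp (S ω - ∫ ω, S ω ∂μ) ∂μ ≤ 1 + (1 + ε) / 2 * Var[S; μ] := by
  set a := ∫ ω, S ω ∂μ with ha
  have hSL : MemLp S 2 μ := .of_bound hS.aestronglyMeasurable ε (ae_of_all _ hSε)
  have hSi : Integrable S μ := hSL.integrable one_le_two
  have hdev : Integrable (fun ω => S ω - a) μ := hSi.sub (integrable_const a)
  have hdevsq : Integrable (fun ω => (S ω - a) ^ 2) μ := (hSL.sub (memLp_const a)).integrable_sq
  have hdev0 : ∫ ω, (S ω - a) ∂μ = 0 := by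
    rw [integral_sub hSi (integrable_const a)]
    simp [← ha]
  have haε : |a| ≤ ε := abs_integral_le_of_forall_abs_le hSε
  calc ∫ ω, Real.exp (S ω - a) ∂μ
      ≤ ∫ ω, (1 + (S ω - a) + (S ω - a) ^ 2 * ((1 + ε) / 2)) ∂μ :=
        integral_mono_of_nonneg (ae_of_all _ fun ω => (Real.exp_pos _).le)
          (((integrable_const 1).add hdev).add (hdevsq.mul_const _)) (ae_of_all _ fun ω =>
            exp_le_of_abs_le ((abs_sub _ _).trans (by linarith [hSε ω])) hε)
    _ = 1 + (1 + ε) / 2 * Var[S; μ] := by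
        rw [integral_add ((integrable_const 1).fun_add hdev) (hdevsq.mul_const _),
          integral_add (integrable_const 1) hdev, hdev0, integral_mul_const,
          variance_eq_integral hS.aemeasurable]
        simp [← ha, mul_comm]

end Elementary

section BlockSum

variable {Ω : Type*}

/-- The sum of the `m` consecutive terms of `Z` that follow the index `s`. -/
def blockSum (Z : ℕ → Ω → ℝ) (s m : ℕ) (ω : Ω) : ℝ :=
  ∑ j ∈ range m, Z (s + j + 1) ω

variable {Z : ℕ → Ω → ℝ} {b : ℝ} {m s n : ℕ}

lemma abs_blockSum_le (hZb : ∀ k ω, |Z k ω| ≤ b) (ω : Ω) : |blockSum Z s m ω| ≤ m * b := by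
  simpa [blockSum] using (abs_sum_le_sum_abs _ _).trans
    (sum_le_card_nsmul (range m) (fun j => |Z (s + j + 1) ω|) b fun _ _ => hZb _ ω)

lemma measurable_pastSigma_blockSum (hn : s + m ≤ n) :
    Measurable[pastSigma Z n] (blockSum Z s m) :=
  Finset.measurable_fun_sum _ fun j hj =>
    measurable_pastSigma le_add_self (by have := mem_range.1 hj; omega)

lemma measurable_futureSigma_blockSum (hn : n ≤ s + 1) :
    Measurable[futureSigma Z n] (blockSum Z s m) :=
  Finset.measurable_fun_sum _ fun _ _ => measurable_futureSigma (by omega)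

variable [MeasurableSpace Ω] {μ : Measure Ω} [IsProbabilityMeasure μ] {ϕ : ℕ → ℝ} {v Φ : ℝ}

lemma PhiMixing.covariance_le (h : PhiMixing μ Z ϕ) (hZ : ∀ k, Measurable (Z k))
    (hZ2 : ∀ k, MemLp (Z k) 2 μ) (hv : ∀ k, 1 ≤ k → ∫ ω, Z k ω ^ 2 ∂μ ≤ v) {k : ℕ} (hk : 1 ≤ k) :
    cov[Z k, Z (k + n); μ] ≤ 2 * √(ϕ n) * v := by
  have hmoment : ∀ k, 0 ≤ ∫ ω, Z k ω ^ 2 ∂μ := fun k => integral_nonneg fun ω => sq_nonneg _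
  have hv0 : 0 ≤ v := (hmoment k).trans (hv k hk)
  have hϕ : 0 ≤ ϕ n := h.nonneg n
  refine le_of_abs_le (abs_le_of_sq_le_sq ?_ (by positivity))
  calc cov[Z k, Z (k + n); μ] ^ 2
      ≤ 4 * ϕ n * (∫ ω, Z k ω ^ 2 ∂μ) * ∫ ω, Z (k + n) ω ^ 2 ∂μ :=
        (h k n hk).sq_covariance_le (pastSigma_le hZ k) (futureSigma_le hZ (k + n))
          (measurable_pastSigma hk le_rfl) (hZ2 k) (measurable_futureSigma le_rfl) (hZ2 (k + n))
    _ ≤ 4 * ϕ n * v * v := by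
        gcongr
        · exact hv k hk
        · exact hv (k + n) (by omega)
    _ = (2 * √(ϕ n) * v) ^ 2 := by
        rw [mul_pow, mul_pow, Real.sq_sqrt hϕ]
        ring

lemma PhiMixing.sum_covariance_le (h : PhiMixing μ Z ϕ) (hZ : ∀ k, Measurable (Z k))
    (hZ2 : ∀ k, MemLp (Z k) 2 μ) (hv : ∀ k, 1 ≤ k → ∫ ω, Z k ω ^ 2 ∂μ ≤ v) (hϕ : Antitone ϕ)
    (hΦ : ∑ k ∈ range m, √(ϕ (k + 1)) ≤ Φ) {i : ℕ} (hi : i < m) :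
    ∑ j ∈ range m, cov[Z (s + i + 1), Z (s + j + 1); μ] ≤ v * (1 + 4 * Φ - 2 * m * √(ϕ m)) := by
  have hsqrt : Antitone fun k => √(ϕ k) := fun _ _ hkl => Real.sqrt_le_sqrt (hϕ hkl)
  have hv0 : 0 ≤ v := (integral_nonneg fun ω => sq_nonneg (Z 1 ω)).trans (hv 1 le_rfl)
  have hpartial : ∀ p ≤ m, ∑ k ∈ range p, 2 * √(ϕ (k + 1)) * v ≤
      2 * v * (Φ - (m - p) * √(ϕ m)) := fun p hp => by
    rw [← sum_mul, ← mul_sum, mul_right_comm]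
    gcongr
    linarith [sum_range_add_mul_le hsqrt hp]
  obtain ⟨p, rfl⟩ := Nat.exists_eq_add_of_lt hi
  have hleft : ∑ j ∈ range i, cov[Z (s + i + 1), Z (s + j + 1); μ] ≤
      ∑ k ∈ range i, 2 * √(ϕ (k + 1)) * v := by
    rw [← sum_range_reflect]
    refine sum_le_sum fun k hk => ?_
    have hindex : s + i + 1 = s + (i - 1 - k) + 1 + (k + 1) := by have := mem_range.1 hk; omega
    rw [covariance_comm, hindex]
    exact h.covariance_le hZ hZ2 hv le_add_self
  have hdiag : cov[Z (s + i + 1), Z (s + i + 1); μ] ≤ v := by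
    rw [covariance_self (hZ _).aemeasurable]
    exact (variance_le_expectation_sq (hZ _).aestronglyMeasurable).trans (hv _ le_add_self)
  have hright : ∑ k ∈ range p, cov[Z (s + i + 1), Z (s + (i + 1 + k) + 1); μ] ≤
      ∑ k ∈ range p, 2 * √(ϕ (k + 1)) * v := by
    refine sum_le_sum fun k _ => ?_
    have hindex : s + (i + 1 + k) + 1 = s + i + 1 + (k + 1) := by omega
    rw [hindex]
    exact h.covariance_le hZ hZ2 hv le_add_self
  have hleftΦ := hpartial i (by omega)
  have hrightΦ := hpartial p (by omega)
  have htail : 0 ≤ v * √(ϕ (i + p + 1)) := by positivity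
  rw [add_right_comm, sum_range_add, sum_range_succ, add_right_comm i 1 p]
  push_cast at hleftΦ hrightΦ ⊢
  linarith

lemma PhiMixing.variance_blockSum_le (h : PhiMixing μ Z ϕ) (hZ : ∀ k, Measurable (Z k))
    (hZ2 : ∀ k, MemLp (Z k) 2 μ) (hv : ∀ k, 1 ≤ k → ∫ ω, Z k ω ^ 2 ∂μ ≤ v) (hϕ : Antitone ϕ)
    (hΦ : ∑ k ∈ range m, √(ϕ (k + 1)) ≤ Φ) :
    Var[blockSum Z s m; μ] ≤ m * (v * (1 + 4 * Φ - 2 * m * √(ϕ m))) := by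
  unfold blockSum
  rw [variance_fun_sum' fun j _ => hZ2 (s + j + 1)]
  simpa using sum_le_card_nsmul (range m) _ _ fun i hi =>
    h.sum_covariance_le hZ hZ2 hv hϕ hΦ (mem_range.1 hi)

lemma sq_integral_blockSum_le (hZ2 : ∀ k, MemLp (Z k) 2 μ)
    (hv : ∀ k, 1 ≤ k → ∫ ω, Z k ω ^ 2 ∂μ ≤ v) :
    (∫ ω, blockSum Z s m ω ∂μ) ^ 2 ≤ m ^ 2 * v := by
  have hmean : ∀ k, 1 ≤ k → (∫ ω, Z k ω ∂μ) ^ 2 ≤ v := fun k hk => by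
    have hvar := variance_nonneg (Z k) μ
    rw [variance_eq_sub (hZ2 k)] at hvar
    exact (sub_nonneg.1 hvar).trans (hv k hk)
  unfold blockSum
  rw [integral_finsetSum _ fun j _ => (hZ2 (s + j + 1)).integrable one_le_two]
  calc (∑ j ∈ range m, ∫ ω, Z (s + j + 1) ω ∂μ) ^ 2
      ≤ m * ∑ j ∈ range m, (∫ ω, Z (s + j + 1) ω ∂μ) ^ 2 := by
        simpa using sq_sum_le_card_mul_sum_sq (s := range m)
          (f := fun j => ∫ ω, Z (s + j + 1) ω ∂μ)
    _ ≤ m * (m * v) := by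
        gcongr
        simpa using sum_le_card_nsmul (range m) (fun j => (∫ ω, Z (s + j + 1) ω ∂μ) ^ 2) v
          fun j _ => hmean _ le_add_self
    _ = m ^ 2 * v := by ring

end BlockSum

section BlockExp

variable {Ω : Type*} [MeasurableSpace Ω] {μ : Measure Ω} [IsProbabilityMeasure μ]
  {Z : ℕ → Ω → ℝ} {ϕ : ℕ → ℝ} {v Φ ε t : ℝ} {m : ℕ}

lemma PhiMixing.integral_exp_blockSum_add_le (h : PhiMixing μ Z ϕ) (hZ : ∀ k, Measurable (Z k))
    (hZ2 : ∀ k, MemLp (Z k) 2 μ) (hv : ∀ k, 1 ≤ k → ∫ ω, Z k ω ^ 2 ∂μ ≤ v) (hϕ : Antitone ϕ)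
    (hϕ1 : ϕ m ≤ 1) (hΦ : ∑ k ∈ range m, √(ϕ (k + 1)) ≤ Φ) (hε : ε ≤ 1 / 2) {s : ℕ}
    (htε : ∀ ω, |t * blockSum Z s m ω| ≤ ε) :
    ∫ ω, Real.exp (t * blockSum Z s m ω - ∫ ω, t * blockSum Z s m ω ∂μ) ∂μ +
        ϕ m * (Real.exp (ε - ∫ ω, t * blockSum Z s m ω ∂μ) -
          Real.exp (-ε - ∫ ω, t * blockSum Z s m ω ∂μ)) ≤
      Real.exp (Real.exp ε * ϕ m + t ^ 2 / 2 * m * v * (1 + 4 * Φ) * (1 + ε)) := by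
  set a := ∫ ω, t * blockSum Z s m ω ∂μ with ha
  have hS : Measurable (blockSum Z s m) := Finset.measurable_fun_sum _ fun _ _ => hZ _
  have hϕ0 : 0 ≤ ϕ m := h.nonneg m
  have hv0 : 0 ≤ v := (integral_nonneg fun ω => sq_nonneg (Z 1 ω)).trans (hv 1 le_rfl)
  have haε : |a| ≤ ε := abs_integral_le_of_forall_abs_le htε
  have hε0 : 0 ≤ ε := (abs_nonneg a).trans haε
  have hmoment : ∫ ω, Real.exp (t * blockSum Z s m ω - a) ∂μ ≤
      1 + (1 + ε) / 2 * (t ^ 2 * (m * (v * (1 + 4 * Φ - 2 * m * √(ϕ m))))) := by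
    refine (integral_exp_sub_integral_le (hS.const_mul t) htε hε).trans ?_
    rw [variance_const_mul]
    gcongr
    exact h.variance_blockSum_le hZ hZ2 hv hϕ hΦ
  have hmean : a ^ 2 ≤ t ^ 2 * (m ^ 2 * v) := by
    rw [ha, integral_const_mul, mul_pow]
    gcongr
    exact sq_integral_blockSum_le hZ2 hv
  have hwidth : Real.exp (ε - a) - Real.exp (-ε - a) ≤ Real.exp ε + t ^ 2 * (m ^ 2 * v) :=
    (exp_sub_sub_exp_neg_sub_le haε hε).trans (by gcongr)
  have hsqrt : ϕ m ≤ (1 + ε) * √(ϕ m) := by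
    have hle : ϕ m ≤ √(ϕ m) := Real.le_sqrt_of_sq_le (pow_le_of_le_one hϕ0 hϕ1 two_ne_zero)
    nlinarith [Real.sqrt_nonneg (ϕ m)]
  calc _ ≤ 1 + (1 + ε) / 2 * (t ^ 2 * (m * (v * (1 + 4 * Φ - 2 * m * √(ϕ m))))) +
        ϕ m * (Real.exp ε + t ^ 2 * (m ^ 2 * v)) := by gcongr
    _ = (Real.exp ε * ϕ m + t ^ 2 / 2 * m * v * (1 + 4 * Φ) * (1 + ε) + 1) -
        t ^ 2 * m ^ 2 * v * ((1 + ε) * √(ϕ m) - ϕ m) := by ring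
    _ ≤ Real.exp ε * ϕ m + t ^ 2 / 2 * m * v * (1 + 4 * Φ) * (1 + ε) + 1 :=
        sub_le_self _ (mul_nonneg (by positivity) (sub_nonneg.2 hsqrt))
    _ ≤ _ := Real.add_one_le_exp _

lemma PhiMixing.integral_exp_sum_blockSum_le (h : PhiMixing μ Z ϕ) (hZ : ∀ k, Measurable (Z k))
    (hZ2 : ∀ k, MemLp (Z k) 2 μ) (hv : ∀ k, 1 ≤ k → ∫ ω, Z k ω ^ 2 ∂μ ≤ v) (hϕ : Antitone ϕ)
    (hϕ1 : ϕ m ≤ 1) (hΦ : ∑ k ∈ range m, √(ϕ (k + 1)) ≤ Φ) (hε : ε ≤ 1 / 2)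
    (htε : ∀ s ω, |t * blockSum Z s m ω| ≤ ε) (s l : ℕ) :
    ∫ ω, Real.exp (∑ i ∈ range l, (t * blockSum Z (s + 2 * i * m) m ω -
        ∫ ω, t * blockSum Z (s + 2 * i * m) m ω ∂μ)) ∂μ ≤
      Real.exp (Real.exp ε * ϕ m + t ^ 2 / 2 * m * v * (1 + 4 * Φ) * (1 + ε)) ^ l := by
  simp_rw [Real.exp_sum]
  refine integral_prod_le_pow (𝒢 := fun i => pastSigma Z (s + 2 * i * m - m))
    (c := fun i => Real.exp (-ε - ∫ ω, t * blockSum Z (s + 2 * i * m) m ω ∂μ))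
    (d := fun i => Real.exp (ε - ∫ ω, t * blockSum Z (s + 2 * i * m) m ω ∂μ))
    (fun i => h.phiDependent_sub (s + 2 * i * m) m) (fun i => pastSigma_le hZ _)
    (fun i => futureSigma_le hZ _) (fun i j hji => ?_) (fun i => ?_)
    (fun i => (Real.exp_pos _).le) (fun i ω => ?_)
    (fun i => h.integral_exp_blockSum_add_le hZ hZ2 hv hϕ hϕ1 hΦ hε (htε _)) l
  · have hgap : s + 2 * j * m + m ≤ s + 2 * i * m - m := by
      have := Nat.mul_le_mul_right m (Nat.succ_le_of_lt hji)
      rw [Nat.succ_mul] at this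
      rw [mul_assoc, mul_assoc]
      omega
    exact (((measurable_pastSigma_blockSum hgap).const_mul t).sub_const _).exp
  · exact (((measurable_futureSigma_blockSum le_rfl).const_mul t).sub_const _).exp
  · obtain ⟨hlower, hupper⟩ := abs_le.1 (htε (s + 2 * i * m) ω)
    exact ⟨by gcongr, by gcongr⟩

end BlockExp

section Truncation

/-- Truncation at level `b`, keeping the values in the closed interval `[-b, b]`; Mathlib's
`ProbabilityTheory.truncation` keeps those in `(-b, b]`. -/
noncomputable def truncateAbs (b x : ℝ) : ℝ :=
  if |x| ≤ b then x else 0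

variable {b : ℝ}

lemma measurable_truncateAbs : Measurable (truncateAbs b) :=
  Measurable.ite (measurableSet_le (by fun_prop) measurable_const) measurable_id measurable_const

lemma abs_truncateAbs_le (hb : 0 ≤ b) (x : ℝ) : |truncateAbs b x| ≤ b := by
  unfold truncateAbs
  split_ifs with hx
  · exact hx
  · simpa using hb

lemma sq_truncateAbs_le {α : ℝ} (hα : α ≤ 1) (hb : 0 ≤ b) (x : ℝ) :
    truncateAbs b x ^ 2 ≤ |x| ^ (1 + α) * b ^ (1 - α) := by
  unfold truncateAbs
  split_ifs with hx
  · calc x ^ 2 = |x| ^ ((1 + α) + (1 - α)) := by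
          rw [← sq_abs, ← Real.rpow_two]
          ring_nf
      _ = |x| ^ (1 + α) * |x| ^ (1 - α) := Real.rpow_add' (abs_nonneg x) (by norm_num)
      _ ≤ |x| ^ (1 + α) * b ^ (1 - α) := by gcongr
  · rw [zero_pow two_ne_zero]
    positivity

variable {Ω : Type*} [MeasurableSpace Ω] {μ : Measure Ω} {Y : Ω → ℝ}

lemma integral_sq_truncateAbs_le {α ν : ℝ} (hα : α ≤ 1) (hb : 0 ≤ b)
    (hint : Integrable (fun ω => |Y ω| ^ (1 + α)) μ) (hν : ∫ ω, |Y ω| ^ (1 + α) ∂μ ≤ ν) :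
    ∫ ω, truncateAbs b (Y ω) ^ 2 ∂μ ≤ ν * b ^ (1 - α) := by
  calc ∫ ω, truncateAbs b (Y ω) ^ 2 ∂μ ≤ ∫ ω, |Y ω| ^ (1 + α) * b ^ (1 - α) ∂μ :=
        integral_mono_of_nonneg (ae_of_all _ fun ω => sq_nonneg _) (hint.mul_const _)
          (ae_of_all _ fun ω => sq_truncateAbs_le hα hb (Y ω))
    _ = (∫ ω, |Y ω| ^ (1 + α) ∂μ) * b ^ (1 - α) := integral_mul_const _ _
    _ ≤ ν * b ^ (1 - α) := by gcongr

lemma memLp_truncateAbs_comp [IsFiniteMeasure μ] (hY : Measurable Y) (hb : 0 ≤ b) :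
    MemLp (truncateAbs b ∘ Y) 2 μ :=
  .of_bound (measurable_truncateAbs.comp hY).aestronglyMeasurable b
    (ae_of_all _ fun ω => abs_truncateAbs_le hb (Y ω))

end Truncation

section MainPart

lemma sum_Icc_one_eq_sum_range {M : Type*} [AddCommMonoid M] (f : ℕ → M) (n : ℕ) :
    ∑ i ∈ Icc 1 n, f i = ∑ i ∈ range n, f (i + 1) := by
  rw [← Ico_add_one_right_eq_Icc, sum_Ico_eq_sum_range]
  simp only [Nat.add_sub_cancel, add_comm 1]

variable {Ω : Type*} [MeasurableSpace Ω] {μ : Measure Ω} [IsProbabilityMeasure μ] {X : ℕ → Ω → ℝ}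
  {b v Φ ε t : ℝ}

lemma sum_mainPart_eq_blockSum_sub (hX : ∀ k, Measurable (X k)) (hb : 0 ≤ b) (s m : ℕ) (ω : Ω) :
    ∑ j ∈ Icc 1 m, mainPart μ X b (s + j) ω =
      blockSum (fun k => truncateAbs b ∘ X k) s m ω -
        ∫ ω, blockSum (fun k => truncateAbs b ∘ X k) s m ω ∂μ := by
  unfold blockSum
  rw [integral_finsetSum _ fun j _ => (memLp_truncateAbs_comp (hX _) hb).integrable one_le_two,
    sum_Icc_one_eq_sum_range, ← sum_sub_distrib]
  rfl

lemma integral_exp_sum_mainPart_le (hX : ∀ k, Measurable (X k)) (hb : 0 ≤ b)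
    (hv : ∀ k, 1 ≤ k → ∫ ω, truncateAbs b (X k ω) ^ 2 ∂μ ≤ v) {m : ℕ}
    (hΦ : ∑ k ∈ range m, √(phiCoef μ X (k + 1)) ≤ Φ) (hε : ε ≤ 1 / 2)
    (htε : |t| * m * b ≤ ε) (s l : ℕ) :
    ∫ ω, Real.exp (t *
        ∑ i ∈ Icc 1 l, ∑ j ∈ Icc 1 m, mainPart μ X b (s + 2 * (i - 1) * m + j) ω) ∂μ ≤
      Real.exp (Real.exp ε * phiCoef μ X m + t ^ 2 / 2 * m * v * (1 + 4 * Φ) * (1 + ε)) ^ l := by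
  set Z : ℕ → Ω → ℝ := fun k => truncateAbs b ∘ X k
  have hblock : ∀ s ω, |t * blockSum Z s m ω| ≤ ε := fun s ω => by
    rw [abs_mul]
    refine le_trans ?_ ((mul_assoc _ _ _).symm.trans_le htε)
    gcongr
    exact abs_blockSum_le (fun k ω => abs_truncateAbs_le hb (X k ω)) ω
  have hbound := (phiMixing_phiCoef.comp measurable_truncateAbs).integral_exp_sum_blockSum_le
    (fun k => measurable_truncateAbs.comp (hX k)) (fun k => memLp_truncateAbs_comp (hX k) hb) hv
    phiCoef_antitone (phiCoef_le_one m) hΦ hε hblock s l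
  simp_rw [integral_const_mul, ← mul_sub, ← mul_sum] at hbound
  simpa only [sum_mainPart_eq_blockSum_sub hX hb, sum_Icc_one_eq_sum_range (n := l),
    Nat.add_sub_cancel] using hbound

end MainPart

theorem block_exp_moment_bound_general {Ω : Type*} [MeasurableSpace Ω] {μ : Measure Ω}
    [IsProbabilityMeasure μ] {X : ℕ → Ω → ℝ} (hX : ∀ n, Measurable (X n))
    (hsum : Summable fun m : ℕ => √(phiCoef μ X (m + 1))) {α ν : ℝ} (hα : α ≤ 1)
    (hint : ∀ n, 1 ≤ n → Integrable (fun ω => |X n ω| ^ (1 + α)) μ)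
    (hν : ∀ n, ∫ ω, |X (n + 1) ω| ^ (1 + α) ∂μ ≤ ν) {b : ℝ} (hb : 0 ≤ b) (m l : ℕ) {ε θ : ℝ}
    (hε : ε ≤ 1 / 2) (hθε : 2 * |θ| * m * b ≤ ε) :
    (∫ ω, Real.exp (2 * θ *
        ∑ i ∈ Icc 1 l, ∑ j ∈ Icc 1 m, mainPart μ X b (2 * (i - 1) * m + j) ω) ∂μ ≤
      Real.exp (Real.exp ε * phiCoef μ X m * l) *
        Real.exp (2 * θ ^ 2 * m * l * ν * (1 + 4 * phiSum μ X) * b ^ (1 - α) * (1 + ε))) ∧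
    ∫ ω, Real.exp (2 * θ *
        ∑ i ∈ Icc 1 l, ∑ j ∈ Icc 1 m, mainPart μ X b ((2 * i - 1) * m + j) ω) ∂μ ≤
      Real.exp (Real.exp ε * phiCoef μ X m * l) *
        Real.exp (2 * θ ^ 2 * m * l * ν * (1 + 4 * phiSum μ X) * b ^ (1 - α) * (1 + ε)) := by
  have hv : ∀ k, 1 ≤ k → ∫ ω, truncateAbs b (X k ω) ^ 2 ∂μ ≤ ν * b ^ (1 - α) := fun k hk => by
    obtain ⟨n, rfl⟩ := Nat.exists_eq_add_of_le' hk
    exact integral_sq_truncateAbs_le hα hb (hint (n + 1) hk) (hν n)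
  have hΦ : ∑ k ∈ range m, √(phiCoef μ X (k + 1)) ≤ phiSum μ X :=
    hsum.sum_le_tsum _ fun _ _ => Real.sqrt_nonneg _
  have hshift : ∀ s, ∫ ω, Real.exp (2 * θ *
        ∑ i ∈ Icc 1 l, ∑ j ∈ Icc 1 m, mainPart μ X b (s + 2 * (i - 1) * m + j) ω) ∂μ ≤
      Real.exp (Real.exp ε * phiCoef μ X m * l) *
        Real.exp (2 * θ ^ 2 * m * l * ν * (1 + 4 * phiSum μ X) * b ^ (1 - α) * (1 + ε)) :=
    fun s => by
      convert integral_exp_sum_mainPart_le (t := 2 * θ) hX hb hv hΦ hε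
        (by rwa [abs_mul, abs_two]) s l using 1
      rw [← Real.exp_nat_mul, ← Real.exp_add]
      ring_nf
  have heven : ∀ i ∈ Icc 1 l, (2 * i - 1) * m = m + 2 * (i - 1) * m := fun i hi => by
    obtain ⟨i, rfl⟩ := Nat.exists_eq_add_of_le' (mem_Icc.1 hi).1
    rw [show 2 * (i + 1) - 1 = 2 * i + 1 by omega, Nat.add_sub_cancel]
    ring
  refine ⟨by simpa only [zero_add] using hshift 0, ?_⟩
  convert hshift m using 5 with ω
  exact sum_congr rfl fun i hi => by rw [heven i hi]

/-- inequalities (15)-(16) of the paper: for the odd blocks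
`ξ_i = ∑_{j=1}^m Y_{2(i-1)m+j}` and the even blocks `η_i = ∑_{j=1}^m Y_{(2i-1)m+j}` of the
main parts, and `θ > 0` with `2θmb ≤ ε ≤ 1/2`,
`E(exp(2θ ∑_{i=1}^l ξ_i)) ≤ exp(e^ε φ(m) l)·exp(2θ²mlνα(1+4φ)b^{1-α}(1+ε))`,
and the same bound holds for the `η_i`. -/
theorem block_exp_moment_bound
    {Ω : Type*} [MeasurableSpace Ω] (μ : Measure Ω) [IsProbabilityMeasure μ]
    (X : ℕ → Ω → ℝ) (hmeas : ∀ n, Measurable (X n))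
    (r C : ℝ) (hr : 2 < r) (hC : 0 < C)
    (hmix : ∀ m : ℕ, 1 ≤ m → phiCoef μ X m ≤ C * ((m : ℝ) + 1) ^ (-r))
    (α να : ℝ) (hα0 : 0 < α) (hα1 : α < 1)
    (hint : ∀ n : ℕ, 1 ≤ n → Integrable (fun ω => |X n ω| ^ (1 + α)) μ)
    (hbdd : BddAbove (Set.range fun n : ℕ => ∫ ω, |X (n + 1) ω| ^ (1 + α) ∂μ))
    (hνα : να = ⨆ n : ℕ, ∫ ω, |X (n + 1) ω| ^ (1 + α) ∂μ) (hνpos : 0 < να)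
    (φ : ℝ) (hφ : φ = phiSum μ X)
    (b : ℝ) (hb : 0 < b) (m l : ℕ) (hm : 1 ≤ m) (hl : 1 ≤ l)
    (ε θ : ℝ) (hε0 : 0 < ε) (hε2 : ε ≤ 1/2) (hθ : 0 < θ)
    (hθmb : 2 * θ * m * b ≤ ε) :
    (∫ ω, Real.exp (2 * θ *
        ∑ i ∈ Finset.Icc 1 l, ∑ j ∈ Finset.Icc 1 m, mainPart μ X b (2*(i-1)*m + j) ω) ∂μ ≤
      Real.exp (Real.exp ε * phiCoef μ X m * l) *
        Real.exp (2 * θ ^ 2 * m * l * να * (1 + 4 * φ) * b ^ (1 - α) * (1 + ε))) ∧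
    ∫ ω, Real.exp (2 * θ *
        ∑ i ∈ Finset.Icc 1 l, ∑ j ∈ Finset.Icc 1 m, mainPart μ X b ((2*i-1)*m + j) ω) ∂μ ≤
      Real.exp (Real.exp ε * phiCoef μ X m * l) *
        Real.exp (2 * θ ^ 2 * m * l * να * (1 + 4 * φ) * b ^ (1 - α) * (1 + ε)) := by
  subst hνα hφ
  exact block_exp_moment_bound_general hmeas (summable_sqrt_phiCoef hr hC.le hmix) hα1.le hint
    (le_ciSup hbdd) hb.le m l hε2 (by rwa [abs_of_pos hθ])
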